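/- Let b be a connected, canonically compactifiable graph over a finite discrete measure space (X,m), let c < 0 and let h ∈ ℓ²(X,m) with h not identically zero. If there exist a lower solution u₀ ∈ D(L) and an upper solution u₁ ∈ D(L) for the equation Lu = h e^u − c with u₀ ≤ u₁ pointwise, then there exists u ∈ D(L) with u₀ ≤ u ≤ u₁ pointwise and Lu(x) = h(x)e^{u(x)} − c for all x ∈ X. -/

import Mathlib

open scoped BigOperators

/-- `u` is square-summable with respect to the measure `m`, i.e. `u ∈ ℓ²(X,m)`. -/
def MemL2 {X : Type*} (m : X → ℝ) (u : X → ℝ) : Prop :=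
  Summable (fun x => u x ^ 2 * m x)

/-- `u` has finite energy: the sum defining `Q̃(u)` converges. -/
def FinEnergy {X : Type*} (b : X → X → ℝ) (u : X → ℝ) : Prop :=
  Summable (fun p : X × X => b p.1 p.2 * (u p.1 - u p.2) ^ 2)

/-- The energy `Q(u) = (1/2) Σ_{x,y} b(x,y) (u(x) - u(y))²`. -/
noncomputable def energy {X : Type*} (b : X → X → ℝ) (u : X → ℝ) : ℝ :=
  (1 / 2) * ∑' p : X × X, b p.1 p.2 * (u p.1 - u p.2) ^ 2

/-- The bilinear energy form `Q(u,v) = (1/2) Σ_{x,y} b(x,y)(u(x)-u(y))(v(x)-v(y))`. -/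
noncomputable def energyBil {X : Type*} (b : X → X → ℝ) (u v : X → ℝ) : ℝ :=
  (1 / 2) * ∑' p : X × X, b p.1 p.2 * (u p.1 - u p.2) * (v p.1 - v p.2)

/-- The form domain `D(Q) = ℓ²(X,m) ∩ D̃`. -/
def MemDQ {X : Type*} (b : X → X → ℝ) (m : X → ℝ) (u : X → ℝ) : Prop :=
  MemL2 m u ∧ FinEnergy b u

/-- The form norm `‖u‖_Q = (Q(u) + ‖u‖₂²)^{1/2}`. -/
noncomputable def formNorm {X : Type*} (b : X → X → ℝ) (m : X → ℝ) (u : X → ℝ) : ℝ :=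
  Real.sqrt (energy b u + ∑' x, u x ^ 2 * m x)

/-- `b` is a graph over `X`: symmetric, nonnegative, zero on the diagonal,
with summable rows. -/
structure IsGraph {X : Type*} (b : X → X → ℝ) : Prop where
  symm : ∀ x y, b x y = b y x
  nonneg : ∀ x y, 0 ≤ b x y
  diag : ∀ x, b x x = 0
  row_summable : ∀ x, Summable (fun y => b x y)

/-- The graph `b` is connected: any two points are joined by a path of edges of
positive weight. -/
def GraphConnected {X : Type*} (b : X → X → ℝ) : Prop :=
  ∀ x y : X, Relation.ReflTransGen (fun a c => 0 < b a c) x y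

/-- `(X,m)` is a finite discrete measure space: `m > 0` everywhere and `m(X) < ∞`. -/
structure FinMeasure {X : Type*} (m : X → ℝ) : Prop where
  pos : ∀ x, 0 < m x
  summable : Summable m

/-- The graph `b` over `(X,m)` is canonically compactifiable: every function in
`D(Q)` is bounded. -/
def CanCompact {X : Type*} (b : X → X → ℝ) (m : X → ℝ) : Prop :=
  ∀ u : X → ℝ, MemDQ b m u → ∃ M : ℝ, ∀ x, |u x| ≤ M

/-- `u ∈ D(L)` with `L u = f` for the Neumann Laplacian `L`:
`u ∈ D(Q)`, `f ∈ ℓ²(X,m)` and `Q(u,v) = ⟨f,v⟩` for all `v ∈ D(Q)`. -/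
def IsLap {X : Type*} (b : X → X → ℝ) (m : X → ℝ) (u f : X → ℝ) : Prop :=
  MemDQ b m u ∧ MemL2 m f ∧
    ∀ v : X → ℝ, MemDQ b m v → energyBil b u v = ∑' x, f x * v x * m x

/-- The mean `ū = ⟨u,1⟩ / m(X)`. -/
noncomputable def mean {X : Type*} (m : X → ℝ) (u : X → ℝ) : ℝ :=
  (∑' x, u x * m x) / (∑' x, m x)


/-!
Choose `k ∈ ℓ²(X,m)` bounded below by a positive constant such that `t ↦ h(x)eᵗ + k(x)t` is
increasing up to `sup u₁`; `k = |h| e^{sup u₁} + 1` will do. The equation says that `u` is a fixed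
point of the map `T` sending `v` to the solution `w` of `(L + k)w = h eᵛ - c + k v`. This linear
problem is solvable by orthogonal projection in a Hilbert space, and canonical compactifiability
makes `w` bounded, so that `k w ∈ ℓ²`. Testing with positive parts shows that `L + k` has an
order-preserving inverse; hence `T` is monotone and maps the order interval `[u₀, u₁]` to itself.
That interval is a complete lattice, so the Knaster–Tarski theorem supplies a fixed point.
-/

section Weighted

variable {ι : Type*} {w f g : ι → ℝ}

theorem summable_weighted_mul (hw : ∀ i, 0 ≤ w i) (hf : Summable fun i ↦ w i * f i ^ 2)
    (hg : Summable fun i ↦ w i * g i ^ 2) : Summable fun i ↦ w i * f i * g i := by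
  refine .of_norm_bounded (hf.add hg) fun i ↦ ?_
  have hfg : |f i * g i| ≤ f i ^ 2 + g i ^ 2 :=
    abs_le.2 ⟨by nlinarith [sq_nonneg (f i + g i)], by nlinarith [sq_nonneg (f i - g i)]⟩
  calc ‖w i * f i * g i‖ = w i * |f i * g i| := by
        rw [mul_assoc, Real.norm_eq_abs, abs_mul, abs_of_nonneg (hw i)]
    _ ≤ w i * (f i ^ 2 + g i ^ 2) := mul_le_mul_of_nonneg_left hfg (hw i)
    _ = w i * f i ^ 2 + w i * g i ^ 2 := mul_add ..

theorem summable_weighted_add_sq (hw : ∀ i, 0 ≤ w i) (hf : Summable fun i ↦ w i * f i ^ 2)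
    (hg : Summable fun i ↦ w i * g i ^ 2) : Summable fun i ↦ w i * (f i + g i) ^ 2 :=
  ((hf.add hg).add ((summable_weighted_mul hw hf hg).mul_left 2)).congr fun i ↦ by ring

theorem summable_weighted_sub_sq (hw : ∀ i, 0 ≤ w i) (hf : Summable fun i ↦ w i * f i ^ 2)
    (hg : Summable fun i ↦ w i * g i ^ 2) : Summable fun i ↦ w i * (f i - g i) ^ 2 :=
  ((hf.add hg).sub ((summable_weighted_mul hw hf hg).mul_left 2)).congr fun i ↦ by ring

end Weighted

section LeastSquares

variable {ι E : Type*}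

theorem memℓp_two_iff_summable_sq {f : ι → ℝ} :
    Memℓp f 2 ↔ Summable fun i ↦ f i ^ 2 := by
  simpa using memℓp_gen_iff (f := f) (p := 2) (by norm_num)

theorem exists_tsum_mul_eq_of_isClosed_range [AddCommGroup E] [Module ℝ E] (A : E →ₗ[ℝ] ι → ℝ)
    (hA : IsClosed (Set.range A)) {g : ι → ℝ} (hg : Summable fun i ↦ g i ^ 2) :
    ∃ u, (Summable fun i ↦ A u i ^ 2) ∧ ∀ v, (Summable fun i ↦ A v i ^ 2) →
      ∑' i, A u i * A v i = ∑' i, g i * A v i := by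
  let coords : lp (fun _ : ι ↦ ℝ) 2 →L[ℝ] ι → ℝ :=
    .pi fun i ↦ lp.evalCLM ℝ (fun _ : ι ↦ ℝ) 2 i
  let V : Submodule ℝ (lp (fun _ : ι ↦ ℝ) 2) := A.range.comap coords.toLinearMap
  have hV : IsClosed (V : Set (lp (fun _ : ι ↦ ℝ) 2)) := hA.preimage coords.continuous
  have : CompleteSpace V := hV.completeSpace_coe
  let G : lp (fun _ : ι ↦ ℝ) 2 := ⟨g, memℓp_two_iff_summable_sq.2 hg⟩
  obtain ⟨u, hu : A u = V.starProjection G⟩ := V.starProjection_apply_mem G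
  have hu2 : Summable fun i ↦ A u i ^ 2 :=
    memℓp_two_iff_summable_sq.1 (hu ▸ lp.memℓp (V.starProjection G))
  refine ⟨u, hu2, fun v hv ↦ ?_⟩
  let F : lp (fun _ : ι ↦ ℝ) 2 := ⟨A v, memℓp_two_iff_summable_sq.2 hv⟩
  have horth : inner ℝ (G - V.starProjection G) F = 0 :=
    V.starProjection_inner_eq_zero G F ⟨v, rfl⟩
  rw [inner_sub_left, sub_eq_zero, lp.inner_eq_tsum, lp.inner_eq_tsum, ← hu] at horth
  simpa [mul_comm, F, G] using horth.symm

end LeastSquares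

theorem memL2_iff_summable_weighted {X : Type*} {m u : X → ℝ} :
    MemL2 m u ↔ Summable fun x ↦ m x * u x ^ 2 := by
  simp only [MemL2, mul_comm]

namespace MemL2

variable {X : Type*} {m u v k : X → ℝ}

theorem add (hm : ∀ x, 0 ≤ m x) (hu : MemL2 m u) (hv : MemL2 m v) :
    MemL2 m fun x ↦ u x + v x := by
  rw [memL2_iff_summable_weighted] at hu hv ⊢
  exact summable_weighted_add_sq hm hu hv

theorem sub (hm : ∀ x, 0 ≤ m x) (hu : MemL2 m u) (hv : MemL2 m v) :
    MemL2 m fun x ↦ u x - v x := by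
  rw [memL2_iff_summable_weighted] at hu hv ⊢
  exact summable_weighted_sub_sq hm hu hv

theorem summable_mul (hm : ∀ x, 0 ≤ m x) (hu : MemL2 m u) (hv : MemL2 m v) :
    Summable fun x ↦ u x * v x * m x := by
  rw [memL2_iff_summable_weighted] at hu hv
  exact (summable_weighted_mul hm hu hv).congr fun x ↦ by ring

theorem const (hm : Summable m) (c : ℝ) : MemL2 m fun _ ↦ c :=
  hm.mul_left (c ^ 2)

theorem mul_of_bounded (hm : ∀ x, 0 ≤ m x) (hk : MemL2 m k) {M : ℝ} (hv : ∀ x, |v x| ≤ M) :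
    MemL2 m fun x ↦ k x * v x := by
  refine .of_nonneg_of_le (fun x ↦ mul_nonneg (sq_nonneg _) (hm x)) (fun x ↦ ?_)
    (hk.mul_left (M ^ 2))
  have hvM : v x ^ 2 ≤ M ^ 2 := sq_le_sq.2 ((hv x).trans (le_abs_self M))
  calc (k x * v x) ^ 2 * m x = v x ^ 2 * (k x ^ 2 * m x) := by ring
    _ ≤ M ^ 2 * (k x ^ 2 * m x) :=
      mul_le_mul_of_nonneg_right hvM (mul_nonneg (sq_nonneg _) (hm x))

theorem of_mem_Icc {a : X → ℝ} (hm : ∀ x, 0 ≤ m x) (hu : MemL2 m u) (hv : MemL2 m v)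
    (ha : a ∈ Set.Icc u v) : MemL2 m a := by
  refine .of_nonneg_of_le (fun x ↦ mul_nonneg (sq_nonneg _) (hm x)) (fun x ↦ ?_)
    (Summable.add hu hv)
  have hsq : a x ^ 2 ≤ u x ^ 2 + v x ^ 2 := by
    rcases le_max_iff.1 (abs_le_max_abs_abs (ha.1 x) (ha.2 x)) with hau | hav
    · linarith [sq_le_sq.2 hau, sq_nonneg (v x)]
    · linarith [sq_le_sq.2 hav, sq_nonneg (u x)]
  calc a x ^ 2 * m x ≤ (u x ^ 2 + v x ^ 2) * m x := mul_le_mul_of_nonneg_right hsq (hm x)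
    _ = u x ^ 2 * m x + v x ^ 2 * m x := add_mul ..

theorem of_summable_mul_weighted (hm : ∀ x, 0 ≤ m x) {ε : ℝ} (hε : 0 < ε) (hk : ∀ x, ε ≤ k x)
    (hu : Summable fun x ↦ k x * m x * u x ^ 2) : MemL2 m u := by
  refine .of_nonneg_of_le (fun x ↦ mul_nonneg (sq_nonneg _) (hm x)) (fun x ↦ ?_)
    (hu.mul_left ε⁻¹)
  rw [inv_mul_eq_div, le_div_iff₀' hε]
  calc ε * (u x ^ 2 * m x) ≤ k x * (u x ^ 2 * m x) :=
        mul_le_mul_of_nonneg_right (hk x) (mul_nonneg (sq_nonneg _) (hm x))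
    _ = k x * m x * u x ^ 2 := by ring

theorem summable_sq_div_mul (hm : ∀ x, 0 < m x) {ε : ℝ} (hε : 0 < ε) (hk : ∀ x, ε ≤ k x)
    (hu : MemL2 m u) : Summable fun x ↦ (u x * m x) ^ 2 / (k x * m x) := by
  have hk' : ∀ x, 0 < k x := fun x ↦ hε.trans_le (hk x)
  refine .of_nonneg_of_le (fun x ↦ div_nonneg (sq_nonneg _) (mul_pos (hk' x) (hm x)).le)
    (fun x ↦ ?_) (hu.mul_left ε⁻¹)
  calc (u x * m x) ^ 2 / (k x * m x) = (k x)⁻¹ * (u x ^ 2 * m x) := by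
        have := (hm x).ne'
        have := (hk' x).ne'
        field_simp
    _ ≤ ε⁻¹ * (u x ^ 2 * m x) :=
      mul_le_mul_of_nonneg_right (inv_anti₀ hε (hk x)) (mul_nonneg (sq_nonneg _) (hm x).le)

end MemL2

section EnergyForm

variable {X : Type*} {b : X → X → ℝ} {m u v : X → ℝ}

theorem FinEnergy.summable_mul (hb : ∀ x y, 0 ≤ b x y) (hu : FinEnergy b u) (hv : FinEnergy b v) :
    Summable fun p : X × X ↦ b p.1 p.2 * (u p.1 - u p.2) * (v p.1 - v p.2) :=
  summable_weighted_mul (fun p ↦ hb p.1 p.2) hu hv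

theorem FinEnergy.sub (hb : ∀ x y, 0 ≤ b x y) (hu : FinEnergy b u) (hv : FinEnergy b v) :
    FinEnergy b fun x ↦ u x - v x := by
  have hsub := summable_weighted_sub_sq (fun p : X × X ↦ hb p.1 p.2) hu hv
  exact hsub.congr fun p ↦ by ring

theorem MemDQ.sub (hb : ∀ x y, 0 ≤ b x y) (hm : ∀ x, 0 ≤ m x) (hu : MemDQ b m u)
    (hv : MemDQ b m v) : MemDQ b m fun x ↦ u x - v x :=
  ⟨hu.1.sub hm hv.1, hu.2.sub hb hv.2⟩

theorem MemDQ.comp_normalContraction (hb : ∀ x y, 0 ≤ b x y) (hm : ∀ x, 0 ≤ m x)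
    (hu : MemDQ b m u) {C : ℝ → ℝ} (hC : LipschitzWith 1 C) (hC0 : C 0 = 0) :
    MemDQ b m fun x ↦ C (u x) := by
  have hCsub : ∀ s t, |C s - C t| ≤ |s - t| := fun s t ↦ by
    simpa [Real.dist_eq] using hC.dist_le_mul s t
  have hCabs : ∀ t, |C t| ≤ |t| := fun t ↦ by simpa [hC0] using hCsub t 0
  exact ⟨.of_nonneg_of_le (fun x ↦ mul_nonneg (sq_nonneg _) (hm x))
      (fun x ↦ mul_le_mul_of_nonneg_right (sq_le_sq.2 (hCabs _)) (hm x)) hu.1,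
    .of_nonneg_of_le (fun p ↦ mul_nonneg (hb _ _) (sq_nonneg _))
      (fun p ↦ mul_le_mul_of_nonneg_left (sq_le_sq.2 (hCsub _ _)) (hb _ _)) hu.2⟩

theorem energyBil_sub_left (hb : ∀ x y, 0 ≤ b x y) {w : X → ℝ} (hu : FinEnergy b u)
    (hv : FinEnergy b v) (hw : FinEnergy b w) :
    energyBil b (fun x ↦ u x - v x) w = energyBil b u w - energyBil b v w := by
  rw [energyBil, energyBil, energyBil, ← mul_sub,
    ← (hu.summable_mul hb hw).tsum_sub (hv.summable_mul hb hw)]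
  congr 2 with p
  ring

theorem energyBil_comp_monotone_nonneg (hb : ∀ x y, 0 ≤ b x y) (u : X → ℝ) {C : ℝ → ℝ}
    (hC : Monotone C) : 0 ≤ energyBil b u fun x ↦ C (u x) := by
  refine mul_nonneg one_half_pos.le (tsum_nonneg fun p ↦ ?_)
  rw [mul_assoc]
  exact mul_nonneg (hb _ _) ((monotone_id.monovary hC).sub_mul_sub_nonneg _ _)

end EnergyForm

namespace IsLap

variable {X : Type*} {b : X → X → ℝ} {m u v f g : X → ℝ}

theorem sub (hb : ∀ x y, 0 ≤ b x y) (hm : ∀ x, 0 ≤ m x) (hu : IsLap b m u f)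
    (hv : IsLap b m v g) : IsLap b m (fun x ↦ u x - v x) fun x ↦ f x - g x := by
  refine ⟨hu.1.sub hb hm hv.1, hu.2.1.sub hm hv.2.1, fun w hw ↦ ?_⟩
  rw [energyBil_sub_left hb hu.1.2 hv.1.2 hw.2, hu.2.2 w hw, hv.2.2 w hw,
    ← (hu.2.1.summable_mul hm hw.1).tsum_sub (hv.2.1.summable_mul hm hw.1)]
  congr 1 with x
  ring

theorem nonpos_of_neg_of_pos (hb : ∀ x y, 0 ≤ b x y) (hm : ∀ x, 0 < m x) (hu : IsLap b m u f)
    (hf : ∀ x, 0 < u x → f x < 0) (x : X) : u x ≤ 0 := by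
  have hm' : ∀ x, 0 ≤ m x := fun x ↦ (hm x).le
  let φ : X → ℝ := fun x ↦ max (u x) 0
  have hφ : MemDQ b m φ :=
    hu.1.comp_normalContraction hb hm' (C := fun t ↦ max t 0) (LipschitzWith.id.max_const 0)
      (max_self 0)
  have hnonneg : 0 ≤ ∑' x, f x * φ x * m x := by
    rw [← hu.2.2 φ hφ]
    exact energyBil_comp_monotone_nonneg hb u fun s t hst ↦ max_le_max_right 0 hst
  have hneg : ∀ x, 0 < u x → f x * φ x * m x < 0 := fun x hx ↦
    mul_neg_of_neg_of_pos (mul_neg_of_neg_of_pos (hf x hx) (lt_max_of_lt_left hx)) (hm x)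
  have hnonpos : ∀ x, f x * φ x * m x ≤ 0 := fun x ↦ by
    rcases le_or_gt (u x) 0 with hx | hx
    · simp [φ, max_eq_right hx]
    · exact (hneg x hx).le
  by_contra! hx
  have hlt : ∑' x, f x * φ x * m x < ∑' _ : X, (0 : ℝ) :=
    (hu.2.1.summable_mul hm' hφ.1).tsum_lt_tsum hnonpos (hneg x hx) summable_zero
  exact hnonneg.not_gt (hlt.trans_eq tsum_zero)

theorem le_of_add_mul_le (hb : ∀ x y, 0 ≤ b x y) (hm : ∀ x, 0 < m x) {k : X → ℝ}
    (hk : ∀ x, 0 < k x) (hu : IsLap b m u f) (hv : IsLap b m v g)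
    (hfg : ∀ x, f x + k x * u x ≤ g x + k x * v x) : u ≤ v := fun x ↦
  sub_nonpos.1 <| (hu.sub hb (fun x ↦ (hm x).le) hv).nonpos_of_neg_of_pos hb hm
    (fun x hx ↦ by nlinarith [hfg x, mul_pos (hk x) hx]) x

end IsLap

section LinearEquation

variable {X : Type*} {b : X → X → ℝ} {m q k f g u v : X → ℝ}

/-- The map `u ↦ (√(b(x,y)/2) (u(x) - u(y)), √q(x) u(x))`, which identifies the Hilbert space of the
form `u ↦ Q(u) + ∑ q u²` with a subspace of `ℓ²`, so that completeness of the form becomes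
closedness of a range. -/
noncomputable def formCoords (b : X → X → ℝ) (q : X → ℝ) :
    (X → ℝ) →ₗ[ℝ] X × X ⊕ X → ℝ where
  toFun u := Sum.elim (fun p ↦ √(b p.1 p.2 / 2) * (u p.1 - u p.2)) fun x ↦ √(q x) * u x
  map_add' u v := by ext (p | x) <;> simp <;> ring
  map_smul' c u := by ext (p | x) <;> simp <;> ring

theorem formCoords_inl (b : X → X → ℝ) (q u : X → ℝ) (p : X × X) :
    formCoords b q u (.inl p) = √(b p.1 p.2 / 2) * (u p.1 - u p.2) := rfl

theorem formCoords_inr (b : X → X → ℝ) (q u : X → ℝ) (x : X) :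
    formCoords b q u (.inr x) = √(q x) * u x := rfl

theorem isClosed_range_formCoords (b : X → X → ℝ) (hq : ∀ x, 0 < q x) :
    IsClosed (Set.range (formCoords b q)) := by
  have hleft : Function.LeftInverse (fun F x ↦ F (.inr x) / √(q x)) (formCoords b q) :=
    fun u ↦ funext fun x ↦ mul_div_cancel_left₀ (u x) (Real.sqrt_pos.2 (hq x)).ne'
  refine hleft.isClosed_range (by fun_prop) (continuous_pi ?_)
  rintro (p | x)
  · simp only [formCoords_inl]; fun_prop
  · simp only [formCoords_inr]; fun_prop

theorem formCoords_inl_mul (hb : ∀ x y, 0 ≤ b x y) (p : X × X) :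
    formCoords b q u (.inl p) * formCoords b q v (.inl p) =
      1 / 2 * (b p.1 p.2 * (u p.1 - u p.2) * (v p.1 - v p.2)) := by
  rw [formCoords_inl, formCoords_inl, mul_mul_mul_comm,
    Real.mul_self_sqrt (div_nonneg (hb _ _) zero_le_two)]
  ring

theorem formCoords_inr_mul (hq : ∀ x, 0 ≤ q x) (x : X) :
    formCoords b q u (.inr x) * formCoords b q v (.inr x) = q x * u x * v x := by
  rw [formCoords_inr, formCoords_inr, mul_mul_mul_comm, Real.mul_self_sqrt (hq x), mul_assoc]

theorem summable_formCoords_sq_iff (hb : ∀ x y, 0 ≤ b x y) (hq : ∀ x, 0 ≤ q x) :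
    (Summable fun i ↦ formCoords b q u i ^ 2) ↔
      FinEnergy b u ∧ Summable fun x ↦ q x * u x ^ 2 := by
  have hinl : (Summable fun p ↦ formCoords b q u (.inl p) ^ 2) ↔ FinEnergy b u := by
    simp only [sq, formCoords_inl_mul hb, FinEnergy, summable_mul_left_iff one_half_pos.ne',
      mul_assoc]
  have hinr : (Summable fun x ↦ formCoords b q u (.inr x) ^ 2) ↔
      Summable fun x ↦ q x * u x ^ 2 := by
    simp only [sq, formCoords_inr_mul hq, mul_assoc]
  rw [← hinl, ← hinr]
  exact ⟨fun h ↦ ⟨h.comp_injective Sum.inl_injective, h.comp_injective Sum.inr_injective⟩,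
    fun h ↦ .sum _ h.1 h.2⟩

theorem tsum_formCoords_mul (hb : ∀ x y, 0 ≤ b x y) (hq : ∀ x, 0 ≤ q x)
    (hu : FinEnergy b u) (hqu : Summable fun x ↦ q x * u x ^ 2)
    (hv : FinEnergy b v) (hqv : Summable fun x ↦ q x * v x ^ 2) :
    ∑' i, formCoords b q u i * formCoords b q v i =
      energyBil b u v + ∑' x, q x * u x * v x := by
  rw [Summable.tsum_sum]
  · simp only [formCoords_inl_mul hb, formCoords_inr_mul hq, tsum_mul_left, energyBil]
  · simpa only [Function.comp_def, formCoords_inl_mul hb]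
      using (hu.summable_mul hb hv).mul_left (1 / 2)
  · simpa only [Function.comp_def, formCoords_inr_mul hq] using summable_weighted_mul hq hqu hqv

theorem exists_energyBil_add_tsum_eq (hb : ∀ x y, 0 ≤ b x y) (hq : ∀ x, 0 < q x)
    (hf : Summable fun x ↦ f x ^ 2 / q x) :
    ∃ w, FinEnergy b w ∧ (Summable fun x ↦ q x * w x ^ 2) ∧
      ∀ v, FinEnergy b v → (Summable fun x ↦ q x * v x ^ 2) →
        energyBil b w v + ∑' x, q x * w x * v x = ∑' x, f x * v x := by
  have hq' : ∀ x, 0 ≤ q x := fun x ↦ (hq x).le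
  let G : X × X ⊕ X → ℝ := Sum.elim 0 fun x ↦ f x / √(q x)
  have hG : Summable fun i ↦ G i ^ 2 := by
    refine .sum _ ?_ ?_
    · simp [G, Function.comp_def]
    · simpa [G, Function.comp_def, div_pow, Real.sq_sqrt (hq' _)] using hf
  obtain ⟨w, hw, hweq⟩ := exists_tsum_mul_eq_of_isClosed_range (formCoords b q)
    (isClosed_range_formCoords b hq) hG
  obtain ⟨hwE, hwq⟩ := (summable_formCoords_sq_iff hb hq').1 hw
  refine ⟨w, hwE, hwq, fun v hvE hvq ↦ ?_⟩
  rw [← tsum_formCoords_mul hb hq' hwE hwq hvE hvq,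
    hweq v ((summable_formCoords_sq_iff hb hq').2 ⟨hvE, hvq⟩)]
  have hsupp : (Function.support fun i ↦ G i * formCoords b q v i) ⊆ Set.range Sum.inr := by
    rintro (p | x) hi
    · exact absurd (zero_mul _) hi
    · exact ⟨x, rfl⟩
  rw [← Sum.inr_injective.tsum_eq hsupp]
  refine tsum_congr fun x ↦ ?_
  rw [formCoords_inr, ← mul_assoc]
  exact congrArg (· * v x) (div_mul_cancel₀ (f x) (Real.sqrt_pos.2 (hq x)).ne')

theorem exists_isLap_sub_mul (hb : ∀ x y, 0 ≤ b x y) (hm : FinMeasure m) (hcc : CanCompact b m)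
    {ε : ℝ} (hε : 0 < ε) (hk : ∀ x, ε ≤ k x) (hk2 : MemL2 m k) (hg : MemL2 m g) :
    ∃ w, IsLap b m w fun x ↦ g x - k x * w x := by
  have hm' : ∀ x, 0 ≤ m x := fun x ↦ (hm.pos x).le
  have hkL2 : ∀ v, MemDQ b m v → MemL2 m fun x ↦ k x * v x := fun v hv ↦ by
    obtain ⟨M, hM⟩ := hcc v hv
    exact hk2.mul_of_bounded hm' hM
  obtain ⟨w, hwE, hwq, hw⟩ := exists_energyBil_add_tsum_eq hb
    (fun x ↦ mul_pos (hε.trans_le (hk x)) (hm.pos x)) (hg.summable_sq_div_mul hm.pos hε hk)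
  have hwQ : MemDQ b m w := ⟨.of_summable_mul_weighted hm' hε hk hwq, hwE⟩
  refine ⟨w, hwQ, hg.sub hm' (hkL2 w hwQ), fun v hv ↦ ?_⟩
  have hvq : Summable fun x ↦ k x * m x * v x ^ 2 :=
    ((hkL2 v hv).summable_mul hm' hv.1).congr fun x ↦ by ring
  have hgv := hg.summable_mul hm' hv.1
  have hkwv := (hkL2 w hwQ).summable_mul hm' hv.1
  calc energyBil b w v = ∑' x, g x * m x * v x - ∑' x, k x * m x * w x * v x :=
        eq_sub_of_add_eq (hw v hv.2 hvq)
    _ = ∑' x, g x * v x * m x - ∑' x, k x * w x * v x * m x := by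
        congr 2 with x <;> ring
    _ = ∑' x, (g x - k x * w x) * v x * m x := by
        rw [← hgv.tsum_sub hkwv]
        congr 1 with x
        ring

end LinearEquation

section LowerUpper

variable {X : Type*} {b : X → X → ℝ} {m k u₀ f₀ u₁ f₁ : X → ℝ} {Φ : X → ℝ → ℝ}

theorem exists_isLap_of_lower_upper (hb : ∀ x y, 0 ≤ b x y) (hm : FinMeasure m)
    (hcc : CanCompact b m) {ε : ℝ} (hε : 0 < ε) (hk : ∀ x, ε ≤ k x) (hk2 : MemL2 m k)
    (hΦ : ∀ x, MonotoneOn (fun t ↦ Φ x t + k x * t) (Set.Icc (u₀ x) (u₁ x)))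
    (hΦ₀ : MemL2 m fun x ↦ Φ x (u₀ x)) (hΦ₁ : MemL2 m fun x ↦ Φ x (u₁ x))
    (hu₀ : IsLap b m u₀ f₀) (hlow : ∀ x, f₀ x ≤ Φ x (u₀ x))
    (hu₁ : IsLap b m u₁ f₁) (hup : ∀ x, Φ x (u₁ x) ≤ f₁ x) (h01 : u₀ ≤ u₁) :
    ∃ u ∈ Set.Icc u₀ u₁, IsLap b m u fun x ↦ Φ x (u x) := by
  have hm' : ∀ x, 0 ≤ m x := fun x ↦ (hm.pos x).le
  have hk' : ∀ x, 0 < k x := fun x ↦ hε.trans_le (hk x)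
  let N : (X → ℝ) → X → ℝ := fun v x ↦ Φ x (v x) + k x * v x
  have hN : MonotoneOn N (Set.Icc u₀ u₁) := fun v hv w hw hvw x ↦
    hΦ x ⟨hv.1 x, hv.2 x⟩ ⟨hw.1 x, hw.2 x⟩ (hvw x)
  have h₀ : u₀ ∈ Set.Icc u₀ u₁ := Set.left_mem_Icc.2 h01
  have h₁ : u₁ ∈ Set.Icc u₀ u₁ := Set.right_mem_Icc.2 h01
  obtain ⟨M₀, hM₀⟩ := hcc u₀ hu₀.1
  obtain ⟨M₁, hM₁⟩ := hcc u₁ hu₁.1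
  have hNL2 : ∀ v ∈ Set.Icc u₀ u₁, MemL2 m (N v) := fun v hv ↦
    .of_mem_Icc hm' (hΦ₀.add hm' (hk2.mul_of_bounded hm' hM₀))
      (hΦ₁.add hm' (hk2.mul_of_bounded hm' hM₁)) ⟨hN h₀ hv hv.1, hN hv h₁ hv.2⟩
  choose T hT using fun v : Set.Icc u₀ u₁ ↦ exists_isLap_sub_mul hb hm hcc hε hk hk2 (hNL2 v v.2)
  have hT₀ : ∀ v, u₀ ≤ T v := fun v ↦
    hu₀.le_of_add_mul_le hb hm.pos hk' (hT v) fun x ↦ by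
      linarith [hlow x, (hN h₀ v.2 v.2.1 x : Φ x (u₀ x) + k x * u₀ x ≤ N v x)]
  have hT₁ : ∀ v, T v ≤ u₁ := fun v ↦
    (hT v).le_of_add_mul_le hb hm.pos hk' hu₁ fun x ↦ by
      linarith [hup x, (hN v.2 h₁ v.2.2 x : N v x ≤ Φ x (u₁ x) + k x * u₁ x)]
  have hTmono : Monotone T := fun v w hvw ↦
    (hT v).le_of_add_mul_le hb hm.pos hk' (hT w) fun x ↦ by
      linarith [hN v.2 w.2 hvw x]
  have : Fact (u₀ ≤ u₁) := ⟨h01⟩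
  let S : Set.Icc u₀ u₁ →o Set.Icc u₀ u₁ := ⟨fun v ↦ ⟨T v, hT₀ v, hT₁ v⟩, hTmono⟩
  have hfix : T S.lfp = S.lfp := congrArg Subtype.val S.map_lfp
  refine ⟨S.lfp, S.lfp.2, ?_⟩
  simpa [hfix, N] using hT S.lfp

end LowerUpper

theorem monotoneOn_mul_exp_add_mul (a M : ℝ) :
    MonotoneOn (fun t ↦ a * Real.exp t + |a| * Real.exp M * t) (Set.Iic M) := by
  refine monotoneOn_of_deriv_nonneg (convex_Iic M) (by fun_prop) (by fun_prop) fun t ht ↦ ?_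
  have hderiv : HasDerivAt (fun t ↦ a * Real.exp t + |a| * Real.exp M * t)
      (a * Real.exp t + |a| * Real.exp M * 1) t :=
    ((Real.hasDerivAt_exp t).const_mul a).add ((hasDerivAt_id t).const_mul _)
  have htM : t ≤ M := interior_subset (s := Set.Iic M) ht
  rw [hderiv.deriv]
  calc 0 ≤ (a + |a|) * Real.exp t :=
        mul_nonneg (by linarith [neg_abs_le a]) (Real.exp_pos t).le
    _ ≤ a * Real.exp t + |a| * Real.exp M * 1 := by
        nlinarith [mul_le_mul_of_nonneg_left (Real.exp_le_exp.2 htM) (abs_nonneg a)]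

theorem stmt13_general {X : Type*} (b : X → X → ℝ) (m : X → ℝ) (hb : ∀ x y, 0 ≤ b x y)
    (hm : FinMeasure m) (hcc : CanCompact b m) (c : ℝ) (h : X → ℝ) (hh2 : MemL2 m h)
    (u₀ f₀ : X → ℝ) (hu₀ : IsLap b m u₀ f₀)
    (hlow : ∀ x, f₀ x ≤ h x * Real.exp (u₀ x) - c)
    (u₁ f₁ : X → ℝ) (hu₁ : IsLap b m u₁ f₁)
    (hup : ∀ x, h x * Real.exp (u₁ x) - c ≤ f₁ x)
    (h01 : ∀ x, u₀ x ≤ u₁ x) :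
    ∃ u : X → ℝ, (∀ x, u₀ x ≤ u x ∧ u x ≤ u₁ x) ∧
      IsLap b m u (fun x ↦ h x * Real.exp (u x) - c) := by
  have hm' : ∀ x, 0 ≤ m x := fun x ↦ (hm.pos x).le
  obtain ⟨M, hM⟩ := hcc u₁ hu₁.1
  have hu₁M : ∀ x, u₁ x ≤ M := fun x ↦ (abs_le.1 (hM x)).2
  have hexp : ∀ v : X → ℝ, v ≤ u₁ → MemL2 m fun x ↦ h x * Real.exp (v x) - c := fun v hv ↦
    (hh2.mul_of_bounded hm' fun x ↦ by
      rw [Real.abs_exp]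
      exact Real.exp_le_exp.2 ((hv x).trans (hu₁M x))).sub hm' (.const hm.summable c)
  have hk : ∀ x, 1 ≤ |h x| * Real.exp M + 1 := fun x ↦
    le_add_of_nonneg_left (by positivity)
  have hk2 : MemL2 m fun x ↦ |h x| * Real.exp M + 1 :=
    .add hm' (.mul_of_bounded hm' (by simpa only [MemL2, sq_abs] using hh2)
      fun _ ↦ (Real.abs_exp M).le) (.const hm.summable 1)
  have hmono : ∀ x, MonotoneOn
      (fun t ↦ (h x * Real.exp t - c) + (|h x| * Real.exp M + 1) * t) (Set.Icc (u₀ x) (u₁ x)) :=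
    fun x s hs t ht hst ↦ by
      have hst' := monotoneOn_mul_exp_add_mul (h x) M (hs.2.trans (hu₁M x))
        (ht.2.trans (hu₁M x)) hst
      dsimp only at hst' ⊢
      linarith
  obtain ⟨u, hu, hLu⟩ := exists_isLap_of_lower_upper hb hm hcc one_pos hk hk2 hmono
    (hexp u₀ h01) (hexp u₁ le_rfl) hu₀ hlow hu₁ hup h01
  exact ⟨u, fun x ↦ ⟨hu.1 x, hu.2 x⟩, hLu⟩

/-- existence of a solution between a lower and an upper solution. -/
theorem stmt13 {X : Type*} [Countable X] (b : X → X → ℝ) (m : X → ℝ)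
    (hb : IsGraph b) (hconn : GraphConnected b) (hm : FinMeasure m)
    (hcc : CanCompact b m) (c : ℝ) (hc : c < 0)
    (h : X → ℝ) (hh2 : MemL2 m h) (hne : h ≠ 0)
    (u₀ f₀ : X → ℝ) (hu₀ : IsLap b m u₀ f₀)
    (hlow : ∀ x, f₀ x ≤ h x * Real.exp (u₀ x) - c)
    (u₁ f₁ : X → ℝ) (hu₁ : IsLap b m u₁ f₁)
    (hup : ∀ x, h x * Real.exp (u₁ x) - c ≤ f₁ x)
    (h01 : ∀ x, u₀ x ≤ u₁ x) :
    ∃ u : X → ℝ, (∀ x, u₀ x ≤ u x ∧ u x ≤ u₁ x) ∧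
      IsLap b m u (fun x => h x * Real.exp (u x) - c) :=
  stmt13_general b m hb.nonneg hm hcc c h hh2 u₀ f₀ hu₀ hlow u₁ f₁ hu₁ hup h01
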